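/- Let Y, X, Z be random vectors in ℝ^p, ℝ^q, ℝ^r forming a Markov chain Y → X → Z, and let l : ℝ^p × ℝ^p → [0,∞) be a bounded Borel loss function with ‖l‖_∞ = sup_{y,y'} l(y,y') < ∞. Assume there exists a Borel-measurable f : ℝ^q → ℝ^p attaining L*_l(Y|X) = E[l(Y,f(X))]. Then for every α ∈ (0,1), L*_l(Y|Z) − L*_l(Y|X) ≤ (‖l‖_∞ / √2) · √( JS_α(P_{Y,X|Z} ‖ P_{Y|Z} ⊗ P_{X|Z} | P_Z) / (α(1−α)) ), where JS_α(P_{Y,X|Z} ‖ P_{Y|Z} ⊗ P_{X|Z} | P_Z) = E_{P_Z}[ JS_α(P_{Y,X|Z}(·|Z) ‖ P_{Y|Z}(·|Z) ⊗ P_{X|Z}(·|Z)) ]. -/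

import Mathlib

open MeasureTheory ProbabilityTheory Topology
open scoped ENNReal

noncomputable section

/-- Minimum expected risk `L*_l(Y|X)` of estimating `Y` from `X` under the loss `l`:
the infimum over Borel-measurable estimators `f` of `E[l(Y, f(X))]`. -/
def minRisk {Ω : Type*} [MeasurableSpace Ω] (μ : Measure Ω) {p q : ℕ}
    (l : (Fin p → ℝ) → (Fin p → ℝ) → ℝ) (Y : Ω → Fin p → ℝ) (X : Ω → Fin q → ℝ) : ℝ≥0∞ :=
  ⨅ (f : (Fin q → ℝ) → Fin p → ℝ) (_ : Measurable f),
    ∫⁻ ω, ENNReal.ofReal (l (Y ω) (f (X ω))) ∂μ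

open Classical in
/-- Kullback–Leibler divergence with values in `ℝ≥0∞`: it equals `∫ log (dP/dQ) dP` when
`P ≪ Q` and the log-density is `P`-integrable, and `∞` otherwise. -/
def klDiv {β : Type*} [MeasurableSpace β] (P Q : Measure β) : ℝ≥0∞ :=
  if P ≪ Q ∧ Integrable (fun x => Real.log (P.rnDeriv Q x).toReal) P then
    ENNReal.ofReal (∫ x, Real.log (P.rnDeriv Q x).toReal ∂P)
  else ⊤

/-- α-Jensen–Shannon divergence:
`JS_α(P‖Q) = α D_KL(P ‖ αP + (1-α)Q) + (1-α) D_KL(Q ‖ αP + (1-α)Q)`.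
(The two KL divergences against the mixture are finite for `α ∈ (0,1)`.) -/
def jsDiv {β : Type*} [MeasurableSpace β] (a : ℝ) (P Q : Measure β) : ℝ :=
  a * (klDiv P (ENNReal.ofReal a • P + ENNReal.ofReal (1 - a) • Q)).toReal
    + (1 - a) * (klDiv Q (ENNReal.ofReal a • P + ENNReal.ofReal (1 - a) • Q)).toReal

open Set

section KullbackLeibler

variable {β : Type*} [MeasurableSpace β]

lemma klDiv_eq_informationTheory_klDiv (P ν : Measure β) [IsProbabilityMeasure P]
    [IsProbabilityMeasure ν] : klDiv P ν = InformationTheory.klDiv P ν := by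
  unfold klDiv
  split_ifs with h
  · rw [InformationTheory.klDiv_of_ac_of_integrable h.1 h.2]
    simp [llr_def]
  · exact (not_not.mp (InformationTheory.klDiv_ne_top_iff.not.mpr h)).symm

lemma InformationTheory.klFun_le_sq_add_one {x : ℝ} (hx : 0 ≤ x) :
    InformationTheory.klFun x ≤ x ^ 2 + 1 := by
  rw [InformationTheory.klFun_apply]
  rcases hx.eq_or_lt with rfl | hx
  · simp
  · nlinarith [Real.log_le_sub_one_of_pos hx]

/-- If `c • P ≤ ν` then the divergence of `P` from `ν` is bounded in terms of `c` only. -/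
lemma InformationTheory.klDiv_le_of_smul_le {P ν : Measure β} [IsProbabilityMeasure P]
    [IsProbabilityMeasure ν] {c : ℝ} (hc : 0 < c) (h : ENNReal.ofReal c • P ≤ ν) :
    InformationTheory.klDiv P ν ≤ ENNReal.ofReal (c⁻¹ ^ 2 + 1) := by
  have hc0 : ENNReal.ofReal c ≠ 0 := by simpa using hc
  have hac : P ≪ ν := (Measure.absolutelyContinuous_smul hc0).trans h.absolutelyContinuous
  have hder : ∀ᵐ x ∂ν, (P.rnDeriv ν x).toReal ≤ c⁻¹ := by
    have h1 := Measure.rnDeriv_smul_left_of_ne_top P ν (ENNReal.ofReal_ne_top (r := c))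
    filter_upwards [h1, Measure.rnDeriv_le_one_of_le h] with x hx hx'
    rw [hx] at hx'
    have h2 := ENNReal.toReal_mono ENNReal.one_ne_top hx'
    simp only [Pi.smul_apply, smul_eq_mul, ENNReal.toReal_mul, ENNReal.toReal_ofReal hc.le,
      ENNReal.toReal_one] at h2
    rw [← one_div, le_div_iff₀ hc]
    linarith
  rw [InformationTheory.klDiv_eq_lintegral_klFun_of_ac hac]
  calc _ ≤ ∫⁻ _, ENNReal.ofReal (c⁻¹ ^ 2 + 1) ∂ν := by
        refine lintegral_mono_ae ?_
        filter_upwards [hder] with x hx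
        refine ENNReal.ofReal_le_ofReal ((klFun_le_sq_add_one ENNReal.toReal_nonneg).trans ?_)
        gcongr
    _ = _ := by simp

/-- The Donsker–Varadhan inequality. -/
lemma InformationTheory.integral_le_toReal_klDiv_add_log {P ν : Measure β} [IsProbabilityMeasure P]
    [IsProbabilityMeasure ν] (hK : InformationTheory.klDiv P ν ≠ ⊤) {g : β → ℝ}
    (hgP : Integrable g P) (hgR : Integrable (fun x ↦ Real.exp (g x)) ν) :
    ∫ x, g x ∂P
      ≤ (InformationTheory.klDiv P ν).toReal + Real.log (∫ x, Real.exp (g x) ∂ν) := by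
  obtain ⟨hac, hint⟩ := InformationTheory.klDiv_ne_top_iff.mp hK
  have : IsProbabilityMeasure (ν.tilted g) := isProbabilityMeasure_tilted hgR
  have h1 := integral_llr_tilted_right hac hgP hgR hint
  have h2 := InformationTheory.integral_llr_add_sub_measure_univ_nonneg
    (hac.trans (absolutelyContinuous_tilted hgR)) (integrable_llr_tilted_right hac hgP hint hgR)
  rw [InformationTheory.toReal_klDiv_of_measure_eq hac (by simp)]
  simp only [probReal_univ] at h2
  linarith

lemma integrable_of_measurable_of_mem_Icc {ν : Measure β} [IsFiniteMeasure ν] {g : β → ℝ} {a b : ℝ}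
    (hg : Measurable g) (hgab : ∀ x, g x ∈ Icc a b) : Integrable g ν :=
  Integrable.of_mem_Icc a b hg.aemeasurable (ae_of_all _ hgab)

/-- Pinsker's inequality, tested against a bounded function. -/
lemma InformationTheory.two_mul_sq_integral_sub_le {P ν : Measure β} [IsProbabilityMeasure P]
    [IsProbabilityMeasure ν] (hK : InformationTheory.klDiv P ν ≠ ⊤) {g : β → ℝ} {M : ℝ}
    (hg : Measurable g) (hgM : ∀ x, g x ∈ Icc 0 M) :
    2 * (∫ x, g x ∂P - ∫ x, g x ∂ν) ^ 2 ≤ M ^ 2 * (InformationTheory.klDiv P ν).toReal := by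
  have hsub := hasSubgaussianMGF_of_mem_Icc (μ := ν) hg.aemeasurable (ae_of_all _ hgM)
  set d := ∫ x, g x ∂P - ∫ x, g x ∂ν with hd
  set K := (InformationTheory.klDiv P ν).toReal with hKdef
  have key : ∀ t : ℝ, 0 ≤ (M ^ 2 / 8) * (t * t) + (-d) * t + K := by
    intro t
    have hint : Integrable (fun x ↦ t * (g x - ∫ y, g y ∂ν)) P :=
      ((integrable_of_measurable_of_mem_Icc hg hgM).sub (integrable_const _)).const_mul t
    have h1 := InformationTheory.integral_le_toReal_klDiv_add_log hK hint
      (hsub.integrable_exp_mul t)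
    have h2 := hsub.mgf_le t
    rw [mgf] at h2
    have h3 := Real.log_le_log (integral_exp_pos (hsub.integrable_exp_mul t)) h2
    rw [Real.log_exp] at h3
    have h4 : ∫ x, t * (g x - ∫ y, g y ∂ν) ∂P = t * d := by
      rw [integral_const_mul, integral_sub (integrable_of_measurable_of_mem_Icc hg hgM)
        (integrable_const _)]
      simp [hd]
    have h5 : ((((‖M - 0‖₊ / 2) ^ 2 : NNReal)) : ℝ) = M ^ 2 / 4 := by
      simp [div_pow]; norm_num
    rw [h5] at h3
    rw [h4] at h1
    linarith
  have := discrim_le_zero key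
  rw [discrim] at this
  linarith

end KullbackLeibler


section JensenShannon

variable {β : Type*} [MeasurableSpace β]

lemma isProbabilityMeasure_mixture (P Q : Measure β) [IsProbabilityMeasure P]
    [IsProbabilityMeasure Q] {a : ℝ} (ha : a ∈ Ioo (0 : ℝ) 1) :
    IsProbabilityMeasure (ENNReal.ofReal a • P + ENNReal.ofReal (1 - a) • Q) := by
  refine ⟨?_⟩
  simp [← ENNReal.ofReal_add ha.1.le (sub_nonneg.mpr ha.2.le)]

lemma jsDiv_nonneg (P Q : Measure β) {a : ℝ} (ha : a ∈ Ioo (0 : ℝ) 1) : 0 ≤ jsDiv a P Q := by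
  have := ha.1
  have := sub_pos.mpr ha.2
  unfold jsDiv
  positivity

lemma klDiv_mixture_left_le (P Q : Measure β) [IsProbabilityMeasure P] [IsProbabilityMeasure Q]
    {a : ℝ} (ha : a ∈ Ioo (0 : ℝ) 1) :
    InformationTheory.klDiv P (ENNReal.ofReal a • P + ENNReal.ofReal (1 - a) • Q)
      ≤ ENNReal.ofReal (a⁻¹ ^ 2 + 1) :=
  have := isProbabilityMeasure_mixture P Q ha
  InformationTheory.klDiv_le_of_smul_le ha.1 (Measure.le_add_right le_rfl)

lemma klDiv_mixture_right_le (P Q : Measure β) [IsProbabilityMeasure P] [IsProbabilityMeasure Q]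
    {a : ℝ} (ha : a ∈ Ioo (0 : ℝ) 1) :
    InformationTheory.klDiv Q (ENNReal.ofReal a • P + ENNReal.ofReal (1 - a) • Q)
      ≤ ENNReal.ofReal ((1 - a)⁻¹ ^ 2 + 1) :=
  have := isProbabilityMeasure_mixture P Q ha
  InformationTheory.klDiv_le_of_smul_le (sub_pos.mpr ha.2) (Measure.le_add_left le_rfl)

lemma jsDiv_eq (P Q : Measure β) [IsProbabilityMeasure P] [IsProbabilityMeasure Q]
    {a : ℝ} (ha : a ∈ Ioo (0 : ℝ) 1) :
    jsDiv a P Q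
      = a * (InformationTheory.klDiv P
          (ENNReal.ofReal a • P + ENNReal.ofReal (1 - a) • Q)).toReal
        + (1 - a) * (InformationTheory.klDiv Q
          (ENNReal.ofReal a • P + ENNReal.ofReal (1 - a) • Q)).toReal := by
  have := isProbabilityMeasure_mixture P Q ha
  rw [jsDiv, klDiv_eq_informationTheory_klDiv, klDiv_eq_informationTheory_klDiv]

lemma jsDiv_le (P Q : Measure β) [IsProbabilityMeasure P] [IsProbabilityMeasure Q]
    {a : ℝ} (ha : a ∈ Ioo (0 : ℝ) 1) :
    jsDiv a P Q ≤ a * (a⁻¹ ^ 2 + 1) + (1 - a) * ((1 - a)⁻¹ ^ 2 + 1) := by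
  have ha0 := ha.1.le
  have ha1 := sub_nonneg.mpr ha.2.le
  rw [jsDiv_eq P Q ha]
  gcongr
  · exact ENNReal.toReal_le_of_le_ofReal (by positivity) (klDiv_mixture_left_le P Q ha)
  · exact ENNReal.toReal_le_of_le_ofReal (by positivity) (klDiv_mixture_right_le P Q ha)

/-- A Pinsker-type inequality for the Jensen–Shannon divergence, tested against a bounded
function. -/
lemma two_mul_sq_integral_sub_le_jsDiv (P Q : Measure β) [IsProbabilityMeasure P]
    [IsProbabilityMeasure Q] {a : ℝ} (ha : a ∈ Ioo (0 : ℝ) 1) {g : β → ℝ} {M : ℝ}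
    (hg : Measurable g) (hgM : ∀ x, g x ∈ Icc 0 M) :
    2 * (a * (1 - a)) * (∫ x, g x ∂Q - ∫ x, g x ∂P) ^ 2 ≤ M ^ 2 * jsDiv a P Q := by
  have := isProbabilityMeasure_mixture P Q ha
  have hP := InformationTheory.two_mul_sq_integral_sub_le
    (ne_top_of_le_ne_top ENNReal.ofReal_ne_top (klDiv_mixture_left_le P Q ha)) hg hgM
  have hQ := InformationTheory.two_mul_sq_integral_sub_le
    (ne_top_of_le_ne_top ENNReal.ofReal_ne_top (klDiv_mixture_right_le P Q ha)) hg hgM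
  have hmix : ∫ x, g x ∂(ENNReal.ofReal a • P + ENNReal.ofReal (1 - a) • Q)
      = a * ∫ x, g x ∂P + (1 - a) * ∫ x, g x ∂Q := by
    rw [integral_add_measure
        ((integrable_of_measurable_of_mem_Icc hg hgM).smul_measure ENNReal.ofReal_ne_top)
        ((integrable_of_measurable_of_mem_Icc hg hgM).smul_measure ENNReal.ofReal_ne_top),
      integral_smul_measure, integral_smul_measure, ENNReal.toReal_ofReal ha.1.le,
      ENNReal.toReal_ofReal (sub_nonneg.mpr ha.2.le), smul_eq_mul, smul_eq_mul]
  rw [jsDiv_eq P Q ha]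
  rw [hmix] at hP hQ
  nlinarith [mul_le_mul_of_nonneg_left hP ha.1.le,
    mul_le_mul_of_nonneg_left hQ (sub_nonneg.mpr ha.2.le)]

end JensenShannon

section Kernel

variable {γ β : Type*} [MeasurableSpace γ] [MeasurableSpace β]

lemma measurable_klDiv_kernel [MeasurableSpace.CountableOrCountablyGenerated γ β]
    (κ η : Kernel γ β) [IsFiniteKernel κ]
    [IsFiniteKernel η] (h : ∀ z, κ z ≪ η z) :
    Measurable fun z ↦ InformationTheory.klDiv (κ z) (η z) := by
  have heq : (fun z ↦ InformationTheory.klDiv (κ z) (η z)) = fun z ↦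
      ∫⁻ x, ENNReal.ofReal (InformationTheory.klFun (κ.rnDeriv η z x).toReal) ∂η z := by
    ext z
    rw [InformationTheory.klDiv_eq_lintegral_klFun_of_ac (h z)]
    refine lintegral_congr_ae ?_
    filter_upwards [κ.rnDeriv_eq_rnDeriv_measure (η := η) (a := z)] with x hx
    rw [hx]
  rw [heq]
  refine Measurable.lintegral_kernel_prod_right ?_
  exact (InformationTheory.measurable_klFun.comp
    (Kernel.measurable_rnDeriv κ η).ennreal_toReal).ennreal_ofReal

lemma measurable_jsDiv_kernel [MeasurableSpace.CountableOrCountablyGenerated γ β]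
    (κ η : Kernel γ β) [IsMarkovKernel κ] [IsMarkovKernel η]
    {a : ℝ} (ha : a ∈ Ioo (0 : ℝ) 1) :
    Measurable fun z ↦ jsDiv a (κ z) (η z) := by
  let ξ : Kernel γ β :=
    { toFun := fun z ↦ ENNReal.ofReal a • κ z + ENNReal.ofReal (1 - a) • η z
      measurable' := by
        refine Measure.measurable_of_measurable_coe _ fun s hs ↦ ?_
        simp only [Measure.add_apply, Measure.smul_apply, smul_eq_mul]
        exact ((κ.measurable_coe hs).const_mul _).add ((η.measurable_coe hs).const_mul _) }
  have hξ : IsMarkovKernel ξ := ⟨fun z ↦ isProbabilityMeasure_mixture (κ z) (η z) ha⟩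
  have hκ : Measurable fun z ↦ InformationTheory.klDiv (κ z) (ξ z) :=
    measurable_klDiv_kernel κ ξ fun z ↦ (InformationTheory.klDiv_ne_top_iff.mp
      (ne_top_of_le_ne_top ENNReal.ofReal_ne_top (klDiv_mixture_left_le (κ z) (η z) ha))).1
  have hη : Measurable fun z ↦ InformationTheory.klDiv (η z) (ξ z) :=
    measurable_klDiv_kernel η ξ fun z ↦ (InformationTheory.klDiv_ne_top_iff.mp
      (ne_top_of_le_ne_top ENNReal.ofReal_ne_top (klDiv_mixture_right_le (κ z) (η z) ha))).1
  simp_rw [jsDiv_eq _ _ ha]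
  exact (hκ.ennreal_toReal.const_mul _).add (hη.ennreal_toReal.const_mul _)

lemma integral_kernel_mem_Icc (κ : Kernel γ β) [IsMarkovKernel κ] {g : β → ℝ} {M : ℝ}
    (hg : Measurable g) (hgM : ∀ x, g x ∈ Icc 0 M) (z : γ) : ∫ x, g x ∂κ z ∈ Icc 0 M := by
  refine ⟨integral_nonneg fun x ↦ (hgM x).1, ?_⟩
  calc ∫ x, g x ∂κ z ≤ ∫ _, M ∂κ z :=
        integral_mono (integrable_of_measurable_of_mem_Icc hg hgM) (integrable_const _)
          fun x ↦ (hgM x).2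
    _ = M := by simp

lemma lintegral_lintegral_ofReal_kernel (ν : Measure γ) [IsProbabilityMeasure ν]
    (κ : Kernel γ β) [IsMarkovKernel κ] {g : β → ℝ} {M : ℝ}
    (hg : Measurable g) (hgM : ∀ x, g x ∈ Icc 0 M) :
    ∫⁻ z, ∫⁻ x, ENNReal.ofReal (g x) ∂κ z ∂ν = ENNReal.ofReal (∫ z, ∫ x, g x ∂κ z ∂ν) := by
  rw [ofReal_integral_eq_lintegral_ofReal
    (integrable_of_measurable_of_mem_Icc hg.stronglyMeasurable.integral_kernel.measurable
      (integral_kernel_mem_Icc κ hg hgM))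
    (ae_of_all _ fun z ↦ (integral_kernel_mem_Icc κ hg hgM z).1)]
  congr with z
  exact (ofReal_integral_eq_lintegral_ofReal (integrable_of_measurable_of_mem_Icc hg hgM)
    (ae_of_all _ fun x ↦ (hgM x).1)).symm

lemma sq_integral_le_integral_sq {ν : Measure γ} [IsProbabilityMeasure ν] {d : γ → ℝ}
    (hd : MemLp d 2 ν) : (∫ z, d z ∂ν) ^ 2 ≤ ∫ z, d z ^ 2 ∂ν := by
  have h := variance_nonneg d ν
  rw [variance_eq_sub hd] at h
  simpa using h

lemma integral_kernel_sub_le_sqrt_jsDiv [MeasurableSpace.CountableOrCountablyGenerated γ β]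
    (ν : Measure γ) [IsProbabilityMeasure ν]
    (κ η : Kernel γ β) [IsMarkovKernel κ] [IsMarkovKernel η]
    {a : ℝ} (ha : a ∈ Ioo (0 : ℝ) 1) {g : β → ℝ} {M : ℝ} (hM : 0 ≤ M)
    (hg : Measurable g) (hgM : ∀ x, g x ∈ Icc 0 M) :
    ∫ z, ∫ x, g x ∂η z ∂ν - ∫ z, ∫ x, g x ∂κ z ∂ν
      ≤ M / √2 * √((∫ z, jsDiv a (κ z) (η z) ∂ν) / (a * (1 - a))) := by
  have ha' : 0 < a * (1 - a) := mul_pos ha.1 (sub_pos.mpr ha.2)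
  have hκ : Measurable fun z ↦ ∫ x, g x ∂κ z := hg.stronglyMeasurable.integral_kernel.measurable
  have hη : Measurable fun z ↦ ∫ x, g x ∂η z := hg.stronglyMeasurable.integral_kernel.measurable
  have hd : MemLp (fun z ↦ ∫ x, g x ∂η z - ∫ x, g x ∂κ z) 2 ν :=
    MemLp.of_bound (hη.sub hκ).aestronglyMeasurable M <| ae_of_all _ fun z ↦ by
      have h1 := integral_kernel_mem_Icc κ hg hgM z
      have h2 := integral_kernel_mem_Icc η hg hgM z
      rw [Real.norm_eq_abs, abs_le]
      constructor <;> linarith [h1.1, h1.2, h2.1, h2.2]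
  have hjs : Integrable (fun z ↦ jsDiv a (κ z) (η z)) ν :=
    integrable_of_measurable_of_mem_Icc (measurable_jsDiv_kernel κ η ha)
      fun z ↦ ⟨jsDiv_nonneg _ _ ha, jsDiv_le _ _ ha⟩
  rw [← integral_sub (integrable_of_measurable_of_mem_Icc hη (integral_kernel_mem_Icc η hg hgM))
    (integrable_of_measurable_of_mem_Icc hκ (integral_kernel_mem_Icc κ hg hgM))]
  have h1 := sq_integral_le_integral_sq hd
  have h2 : 2 * (a * (1 - a)) * ∫ z, (∫ x, g x ∂η z - ∫ x, g x ∂κ z) ^ 2 ∂ν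
      ≤ M ^ 2 * ∫ z, jsDiv a (κ z) (η z) ∂ν := by
    rw [← integral_const_mul, ← integral_const_mul]
    exact integral_mono (hd.integrable_sq.const_mul _) (hjs.const_mul _)
      fun z ↦ two_mul_sq_integral_sub_le_jsDiv (κ z) (η z) ha hg hgM
  have hJ : 0 ≤ ∫ z, jsDiv a (κ z) (η z) ∂ν := integral_nonneg fun z ↦ jsDiv_nonneg _ _ ha
  refine le_of_sq_le_sq ?_ (by positivity)
  rw [mul_pow, div_pow, Real.sq_sqrt zero_le_two, Real.sq_sqrt (by positivity)]
  refine h1.trans ?_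
  rw [div_mul_div_comm, le_div_iff₀ (by positivity)]
  linarith

end Kernel

section Risk

variable {Ω : Type*} [MeasurableSpace Ω] (μ : Measure Ω) [IsProbabilityMeasure μ] {p q r : ℕ}

/-- Estimating `Y` by applying `f` to an independent copy of `X` drawn from `P_{X|Z}` is a
randomized estimator of `Y` given `Z`, so it does no better than the minimum risk. -/
lemma minRisk_le_lintegral_condDistrib_prod [StandardBorelSpace Ω] [Nonempty Ω]
    {Y : Ω → Fin p → ℝ} (X : Ω → Fin q → ℝ) {Z : Ω → Fin r → ℝ}
    (hY : Measurable Y) (hZ : Measurable Z)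
    {l : (Fin p → ℝ) → (Fin p → ℝ) → ℝ}
    (hl : Measurable fun yy : (Fin p → ℝ) × (Fin p → ℝ) ↦ l yy.1 yy.2)
    {f : (Fin q → ℝ) → Fin p → ℝ} (hf : Measurable f) :
    minRisk μ l Y Z ≤ ∫⁻ z, ∫⁻ yx, ENNReal.ofReal (l yx.1 (f yx.2))
      ∂((condDistrib Y Z μ ×ₖ condDistrib X Z μ) z) ∂(μ.map Z) := by
  obtain ⟨h, hh, hmap⟩ := (condDistrib X Z μ).exists_measurable_map_eq_unitInterval
  have hloss : Measurable fun yx : (Fin p → ℝ) × (Fin q → ℝ) ↦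
      ENNReal.ofReal (l yx.1 (f yx.2)) :=
    (hl.comp (measurable_fst.prodMk (hf.comp measurable_snd))).ennreal_ofReal
  have hinner : ∀ u : unitInterval, ∫⁻ ω, ENNReal.ofReal (l (Y ω) (f (h (Z ω) u))) ∂μ
      = ∫⁻ z, ∫⁻ y, ENNReal.ofReal (l y (f (h z u))) ∂condDistrib Y Z μ z ∂(μ.map Z) := by
    intro u
    have hm : Measurable fun zy : (Fin r → ℝ) × (Fin p → ℝ) ↦
        ENNReal.ofReal (l zy.2 (f (h zy.1 u))) :=
      hloss.comp (measurable_snd.prodMk (hh.comp (measurable_fst.prodMk measurable_const)))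
    rw [← Measure.lintegral_compProd hm, compProd_map_condDistrib hY.aemeasurable,
      lintegral_map hm (hZ.prodMk hY)]
  have hprob : IsProbabilityMeasure (μ.map Z) := Measure.isProbabilityMeasure_map hZ.aemeasurable
  calc minRisk μ l Y Z = ∫⁻ _ : unitInterval, minRisk μ l Y Z := by simp
    _ ≤ ∫⁻ u : unitInterval, ∫⁻ ω, ENNReal.ofReal (l (Y ω) (f (h (Z ω) u))) ∂μ := by
        refine lintegral_mono fun u ↦ iInf₂_le (fun z ↦ f (h z u)) ?_
        exact hf.comp (hh.comp (measurable_id.prodMk measurable_const))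
    _ = ∫⁻ u : unitInterval, ∫⁻ z, ∫⁻ y, ENNReal.ofReal (l y (f (h z u)))
          ∂condDistrib Y Z μ z ∂(μ.map Z) := by simp_rw [hinner]
    _ = ∫⁻ z, ∫⁻ u : unitInterval, ∫⁻ y, ENNReal.ofReal (l y (f (h z u)))
          ∂condDistrib Y Z μ z ∂volume ∂(μ.map Z) := by
        refine lintegral_lintegral_swap (Measurable.aemeasurable ?_)
        have hm : Measurable fun w : (unitInterval × (Fin r → ℝ)) × (Fin p → ℝ) ↦
            ENNReal.ofReal (l w.2 (f (h w.1.2 w.1.1))) :=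
          hloss.comp (measurable_snd.prodMk (hh.comp
            ((measurable_snd.comp measurable_fst).prodMk (measurable_fst.comp measurable_fst))))
        exact Measurable.lintegral_kernel_prod_right
          (κ := (condDistrib Y Z μ).comap Prod.snd measurable_snd) hm
    _ = _ := by
        refine lintegral_congr fun z ↦ ?_
        rw [Kernel.prod_apply, lintegral_prod_symm' _ hloss, ← hmap z,
          lintegral_map hloss.lintegral_prod_left' hh.of_uncurry_left]

end Risk

/-- α-Jensen–Shannon bound on the excess minimum risk for bounded loss
functions: for a Markov chain `Y → X → Z`, a bounded Borel loss `l` with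
`‖l‖_∞ = sup_{y,y'} l(y,y')`, and an optimal estimator `f` attaining `L*_l(Y|X)`, for every
`α ∈ (0,1)`,
`L*_l(Y|Z) - L*_l(Y|X)
  ≤ (‖l‖_∞ / √2) √(JS_α(P_{Y,X|Z} ‖ P_{Y|Z} ⊗ P_{X|Z} | P_Z) / (α(1-α)))`. -/
theorem excess_risk_js_bound_bounded_loss
    {Ω : Type*} [MeasurableSpace Ω] [StandardBorelSpace Ω] [Nonempty Ω]
    (μ : Measure Ω) [IsProbabilityMeasure μ] {p q r : ℕ}
    (Y : Ω → Fin p → ℝ) (X : Ω → Fin q → ℝ) (Z : Ω → Fin r → ℝ)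
    (hY : Measurable Y) (hX : Measurable X) (hZ : Measurable Z)
    (l : (Fin p → ℝ) → (Fin p → ℝ) → ℝ)
    (hl : Measurable fun yy : (Fin p → ℝ) × (Fin p → ℝ) => l yy.1 yy.2)
    (hl0 : ∀ y y', 0 ≤ l y y')
    (hlbdd : BddAbove (Set.range fun yy : (Fin p → ℝ) × (Fin p → ℝ) => l yy.1 yy.2))
    (hMarkov : CondIndepFun (MeasurableSpace.comap X inferInstance) hX.comap_le Y Z μ)
    (f : (Fin q → ℝ) → Fin p → ℝ) (hf : Measurable f)
    (hopt : ∫⁻ ω, ENNReal.ofReal (l (Y ω) (f (X ω))) ∂μ = minRisk μ l Y X)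
    (α : ℝ) (hα : α ∈ Set.Ioo (0 : ℝ) 1) :
    minRisk μ l Y Z - minRisk μ l Y X
      ≤ ENNReal.ofReal ((⨆ yy : (Fin p → ℝ) × (Fin p → ℝ), l yy.1 yy.2) / Real.sqrt 2
          * Real.sqrt ((∫ z, jsDiv α (condDistrib (fun ω => (Y ω, X ω)) Z μ z)
              ((condDistrib Y Z μ z).prod (condDistrib X Z μ z)) ∂(μ.map Z))
            / (α * (1 - α)))) := by
  have hprob : IsProbabilityMeasure (μ.map Z) := Measure.isProbabilityMeasure_map hZ.aemeasurable
  set M := ⨆ yy : (Fin p → ℝ) × (Fin p → ℝ), l yy.1 yy.2 with hM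
  have hg : Measurable fun yx : (Fin p → ℝ) × (Fin q → ℝ) ↦ l yx.1 (f yx.2) :=
    hl.comp (measurable_fst.prodMk (hf.comp measurable_snd))
  have hgM : ∀ yx : (Fin p → ℝ) × (Fin q → ℝ), l yx.1 (f yx.2) ∈ Icc 0 M := fun yx ↦
    ⟨hl0 _ _, le_ciSup hlbdd (yx.1, f yx.2)⟩
  have hM0 : 0 ≤ M := (hgM (0, 0)).1.trans (hgM (0, 0)).2
  have hYX : Measurable fun ω ↦ (Y ω, X ω) := hY.prodMk hX
  have hX_risk : minRisk μ l Y X = ENNReal.ofReal (∫ z, ∫ yx, l yx.1 (f yx.2)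
      ∂condDistrib (fun ω ↦ (Y ω, X ω)) Z μ z ∂(μ.map Z)) := by
    rw [← hopt, ← lintegral_lintegral_ofReal_kernel (μ.map Z)
      (condDistrib (fun ω ↦ (Y ω, X ω)) Z μ) hg hgM]
    have hm : Measurable fun w : (Fin r → ℝ) × ((Fin p → ℝ) × (Fin q → ℝ)) ↦
        ENNReal.ofReal (l w.2.1 (f w.2.2)) := (hg.comp measurable_snd).ennreal_ofReal
    rw [← Measure.lintegral_compProd hm, compProd_map_condDistrib hYX.aemeasurable,
      lintegral_map hm (hZ.prodMk hYX)]
  have hZ_risk := minRisk_le_lintegral_condDistrib_prod μ X hY hZ hl hf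
  rw [lintegral_lintegral_ofReal_kernel (μ.map Z) _ hg hgM] at hZ_risk
  have hbound := integral_kernel_sub_le_sqrt_jsDiv (μ.map Z)
    (condDistrib (fun ω ↦ (Y ω, X ω)) Z μ) (condDistrib Y Z μ ×ₖ condDistrib X Z μ) hα hM0 hg hgM
  simp_rw [Kernel.prod_apply] at hbound hZ_risk
  rw [hX_risk]
  refine (tsub_le_tsub_right hZ_risk _).trans ?_
  rw [← ENNReal.ofReal_sub _ (integral_nonneg fun z ↦ integral_nonneg fun yx ↦ (hgM yx).1)]
  exact ENNReal.ofReal_le_ofReal hbound
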